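/- Let (A,·,{·,·}) be a transposed Poisson algebra and let α : A → A be a morphism of transposed Poisson algebras (a linear map with α(x·y) = α(x)·α(y) and α({x,y}) = {α(x),α(y)}). Define x ·_α y = α(x·y) and {x,y}_α = α({x,y}). Then (A, ·_α, {·,·}_α, α) is a transposed Hom-Poisson algebra. Moreover, if (A',·',{·,·}') is another transposed Poisson algebra with morphism α' : A' → A', and f : A → A' is a morphism of transposed Poisson algebras with f∘α = α'∘f, then f is a morphism of the transposed Hom-Poisson algebras (A,·_α,{·,·}_α,α) → (A',·'_{α'},{·,·}'_{α'},α'), i.e. f(x ·_α y) = f(x) ·'_{α'} f(y), f({x,y}_α) = {f(x),f(y)}'_{α'} and f∘α = α'∘f. -/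

import Mathlib

/-!
Twisting works one level more generally: a Hom-algebra with twisting map `β` may be twisted along
any endomorphism `α`, and the new twisting map is `α ∘ β`. Every cubic monomial in a
Hom-identity multiplies a product of two elements by a twisted element. After twisting,
multiplicativity of `α` moves all its copies to the front of such a monomial, so the twisted
identity is the image of the original one under `α ∘ α`. An untwisted algebra is the case `β = id`.
-/

section YauTwist

variable {R A B : Type*} [CommRing R] [AddCommGroup A] [Module R A] [AddCommGroup B] [Module R B]

/-- The Yau twist `(x, y) ↦ α (μ x y)` of a bilinear product `μ` along a linear map `α`. -/
def yauTwist (μ : A →ₗ[R] A →ₗ[R] A) (α : A →ₗ[R] A) : A →ₗ[R] A →ₗ[R] A :=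
  μ.compr₂ α

/-- The linear map `f` is a morphism of nonassociative algebras `(A, μ) → (B, ν)`. The products
are arguments, not instances, because one module carries several of them. -/
def PreservesProduct (f : A →ₗ[R] B) (μ : A →ₗ[R] A →ₗ[R] A) (ν : B →ₗ[R] B →ₗ[R] B) : Prop :=
  ∀ x y, f (μ x y) = ν (f x) (f y)

/-- Commutative Hom-associative algebras `(A, mul, β)`; `β = id` gives commutative associative
algebras. -/
structure IsCommHomAssoc (mul : A →ₗ[R] A →ₗ[R] A) (β : A →ₗ[R] A) : Prop where
  mul_comm : ∀ x y, mul x y = mul y x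
  mul_assoc : ∀ x y z, mul (mul x y) (β z) = mul (β x) (mul y z)

/-- Hom-Lie algebras `(A, br, β)`; `β = id` gives Lie algebras. Skew-symmetry is
`br x y = -br y x`, which does not force `br x x = 0` in the presence of 2-torsion. -/
structure IsHomLie (br : A →ₗ[R] A →ₗ[R] A) (β : A →ₗ[R] A) : Prop where
  skew : ∀ x y, br x y = -br y x
  jacobi : ∀ x y z, br (β x) (br y z) + br (β y) (br z x) + br (β z) (br x y) = 0

/-- Transposed Hom-Poisson algebras `(A, mul, br, β)`; `β = id` gives transposed Poisson
algebras. -/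
structure IsTransposedHomPoisson (mul br : A →ₗ[R] A →ₗ[R] A) (β : A →ₗ[R] A) : Prop
    extends IsCommHomAssoc mul β, IsHomLie br β where
  transposed_leibniz : ∀ x y z,
    (2 : R) • mul (β z) (br x y) = br (mul z x) (β y) + br (β x) (mul z y)

/-- Morphisms `(A, mul, br, β) → (B, mul', br', β')` of transposed Hom-Poisson algebras. The
identities of source and target are not part of the predicate. -/
structure IsTransposedHomPoissonHom (f : A →ₗ[R] B)
    (mul br : A →ₗ[R] A →ₗ[R] A) (β : A →ₗ[R] A)
    (mul' br' : B →ₗ[R] B →ₗ[R] B) (β' : B →ₗ[R] B) : Prop where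
  map_mul : PreservesProduct f mul mul'
  map_br : PreservesProduct f br br'
  map_twist : ∀ x, f (β x) = β' (f x)

variable {μ mul br : A →ₗ[R] A →ₗ[R] A} {α β : A →ₗ[R] A}
variable {ν mul' br' : B →ₗ[R] B →ₗ[R] B} {α' β' : B →ₗ[R] B} {f : A →ₗ[R] B}

theorem yauTwist_apply (μ : A →ₗ[R] A →ₗ[R] A) (α : A →ₗ[R] A) (x y : A) :
    yauTwist μ α x y = α (μ x y) :=
  rfl

theorem yauTwist_yauTwist_left (hα : PreservesProduct α μ μ) (ν : A →ₗ[R] A →ₗ[R] A)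
    (x y z : A) : yauTwist μ α (yauTwist ν α x y) (α z) = α (α (μ (ν x y) z)) :=
  congrArg α (hα _ _).symm

theorem yauTwist_yauTwist_right (hα : PreservesProduct α μ μ) (ν : A →ₗ[R] A →ₗ[R] A)
    (x y z : A) : yauTwist μ α (α x) (yauTwist ν α y z) = α (α (μ x (ν y z))) :=
  congrArg α (hα _ _).symm

theorem PreservesProduct.yauTwist (hf : PreservesProduct f μ ν)
    (hfα : ∀ x, f (α x) = α' (f x)) :
    PreservesProduct f (yauTwist μ α) (yauTwist ν α') := fun x y => by
  rw [yauTwist_apply, yauTwist_apply, hfα, hf]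

theorem IsCommHomAssoc.yauTwist (h : IsCommHomAssoc mul β) (hα : PreservesProduct α mul mul) :
    IsCommHomAssoc (yauTwist mul α) (α ∘ₗ β) where
  mul_comm x y := congrArg α (h.mul_comm x y)
  mul_assoc x y z := by
    simp only [LinearMap.comp_apply, yauTwist_yauTwist_left hα, yauTwist_yauTwist_right hα,
      h.mul_assoc]

theorem IsHomLie.yauTwist (h : IsHomLie br β) (hα : PreservesProduct α br br) :
    IsHomLie (yauTwist br α) (α ∘ₗ β) where
  skew x y := by rw [yauTwist_apply, yauTwist_apply, h.skew, map_neg]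
  jacobi x y z := by
    simp only [LinearMap.comp_apply, yauTwist_yauTwist_right hα, ← map_add, h.jacobi, map_zero]

theorem IsTransposedHomPoisson.yauTwist (h : IsTransposedHomPoisson mul br β)
    (hα_mul : PreservesProduct α mul mul) (hα_br : PreservesProduct α br br) :
    IsTransposedHomPoisson (yauTwist mul α) (yauTwist br α) (α ∘ₗ β) where
  toIsCommHomAssoc := h.toIsCommHomAssoc.yauTwist hα_mul
  toIsHomLie := h.toIsHomLie.yauTwist hα_br
  transposed_leibniz x y z := by
    simp only [LinearMap.comp_apply, yauTwist_yauTwist_left hα_br, yauTwist_yauTwist_right hα_br,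
      yauTwist_yauTwist_right hα_mul, ← map_add, ← map_smul, h.transposed_leibniz]

theorem IsTransposedHomPoissonHom.yauTwist
    (hf : IsTransposedHomPoissonHom f mul br β mul' br' β') (hfα : ∀ x, f (α x) = α' (f x)) :
    IsTransposedHomPoissonHom f (yauTwist mul α) (yauTwist br α) (α ∘ₗ β)
      (yauTwist mul' α') (yauTwist br' α') (α' ∘ₗ β') where
  map_mul := hf.map_mul.yauTwist hfα
  map_br := hf.map_br.yauTwist hfα
  map_twist x := by simp only [LinearMap.comp_apply, hfα, hf.map_twist]

theorem yauTwist_transposedPoisson_general (h : IsTransposedHomPoisson mul br β)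
    (hα_mul : PreservesProduct α mul mul) (hα_br : PreservesProduct α br br)
    (hf : IsTransposedHomPoissonHom f mul br β mul' br' β') (hfα : ∀ x, f (α x) = α' (f x)) :
    IsTransposedHomPoisson (yauTwist mul α) (yauTwist br α) (α ∘ₗ β) ∧
      IsTransposedHomPoissonHom f (yauTwist mul α) (yauTwist br α) (α ∘ₗ β)
        (yauTwist mul' α') (yauTwist br' α') (α' ∘ₗ β') :=
  ⟨h.yauTwist hα_mul hα_br, hf.yauTwist hfα⟩

end YauTwist

/-- The Yau twist of a transposed Poisson algebra along a morphism α
is a transposed Hom-Poisson algebra, and morphisms commuting with the twisting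
maps are carried to morphisms of the twisted algebras. -/
theorem yauTwist_transposedPoisson
    {K A A' : Type*} [Field K] [CharZero K]
    [AddCommGroup A] [Module K A] [AddCommGroup A'] [Module K A']
    -- transposed Poisson algebra (A, mul, br)
    (mul : A →ₗ[K] A →ₗ[K] A) (br : A →ₗ[K] A →ₗ[K] A)
    (hcomm : ∀ x y : A, mul x y = mul y x)
    (hassoc : ∀ x y z : A, mul (mul x y) z = mul x (mul y z))
    (hskew : ∀ x y : A, br x y = - br y x)
    (hjac : ∀ x y z : A, br x (br y z) + br y (br z x) + br z (br x y) = 0)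
    (hleib : ∀ x y z : A, (2 : K) • mul z (br x y) = br (mul z x) y + br x (mul z y))
    -- morphism α of (A, mul, br)
    (α : A →ₗ[K] A)
    (hαm : ∀ x y : A, α (mul x y) = mul (α x) (α y))
    (hαb : ∀ x y : A, α (br x y) = br (α x) (α y))
    -- twisted operations on A
    (mulα brα : A → A → A)
    (hmulα : ∀ x y : A, mulα x y = α (mul x y))
    (hbrα : ∀ x y : A, brα x y = α (br x y))
    -- transposed Poisson algebra (A', mul', br')
    (mul' : A' →ₗ[K] A' →ₗ[K] A') (br' : A' →ₗ[K] A' →ₗ[K] A')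
    (hcomm' : ∀ x y : A', mul' x y = mul' y x)
    (hassoc' : ∀ x y z : A', mul' (mul' x y) z = mul' x (mul' y z))
    (hskew' : ∀ x y : A', br' x y = - br' y x)
    (hjac' : ∀ x y z : A', br' x (br' y z) + br' y (br' z x) + br' z (br' x y) = 0)
    (hleib' : ∀ x y z : A', (2 : K) • mul' z (br' x y) = br' (mul' z x) y + br' x (mul' z y))
    -- morphism α' of (A', mul', br')
    (α' : A' →ₗ[K] A')
    (hα'm : ∀ x y : A', α' (mul' x y) = mul' (α' x) (α' y))
    (hα'b : ∀ x y : A', α' (br' x y) = br' (α' x) (α' y))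
    -- twisted operations on A'
    (mul'α' br'α' : A' → A' → A')
    (hmul'α' : ∀ x y : A', mul'α' x y = α' (mul' x y))
    (hbr'α' : ∀ x y : A', br'α' x y = α' (br' x y))
    -- morphism f of transposed Poisson algebras commuting with the twists
    (f : A →ₗ[K] A')
    (hfm : ∀ x y : A, f (mul x y) = mul' (f x) (f y))
    (hfb : ∀ x y : A, f (br x y) = br' (f x) (f y))
    (hfα : ∀ x : A, f (α x) = α' (f x)) :
    -- (A, mulα, brα, α) is a transposed Hom-Poisson algebra
    ((∀ x y : A, mulα x y = mulα y x) ∧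
     (∀ x y z : A, mulα (mulα x y) (α z) = mulα (α x) (mulα y z)) ∧
     (∀ x y : A, brα x y = - brα y x) ∧
     (∀ x y z : A, brα (α x) (brα y z) + brα (α y) (brα z x) + brα (α z) (brα x y) = 0) ∧
     (∀ x y z : A,
       (2 : K) • mulα (α z) (brα x y) = brα (mulα z x) (α y) + brα (α x) (mulα z y))) ∧
    -- f is a morphism of the twisted transposed Hom-Poisson algebras
    ((∀ x y : A, f (mulα x y) = mul'α' (f x) (f y)) ∧
     (∀ x y : A, f (brα x y) = br'α' (f x) (f y)) ∧
     (∀ x : A, f (α x) = α' (f x))) := by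
  obtain rfl : mulα = fun x y => yauTwist mul α x y := funext₂ hmulα
  obtain rfl : brα = fun x y => yauTwist br α x y := funext₂ hbrα
  obtain rfl : mul'α' = fun x y => yauTwist mul' α' x y := funext₂ hmul'α'
  obtain rfl : br'α' = fun x y => yauTwist br' α' x y := funext₂ hbr'α'
  have hA : IsTransposedHomPoisson mul br LinearMap.id := ⟨⟨hcomm, hassoc⟩, ⟨hskew, hjac⟩, hleib⟩
  have hf : IsTransposedHomPoissonHom f mul br LinearMap.id mul' br' LinearMap.id :=
    ⟨hfm, hfb, fun _ => rfl⟩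
  obtain ⟨hAα, hfα'⟩ := yauTwist_transposedPoisson_general hA hαm hαb hf hfα
  exact ⟨⟨hAα.mul_comm, hAα.mul_assoc, hAα.skew, hAα.jacobi, hAα.transposed_leibniz⟩,
    hfα'.map_mul, hfα'.map_br, hfα'.map_twist⟩
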